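/- Let ≿ be any binary relation on the matchings of G with ≿_p ⊆ ≿ ⊆ ≿_wp. Then every maximal element of ≿ has size at most the maximum size of a popular matching in G, and some maximal element of ≿ attains this size; hence the size of a maximum-size maximal element of ≿ is the same for every such relation ≿ (it equals the size of a maximum-size popular matching). -/

import Mathlib

/-!
Many-to-many matchings with two-sided preferences, votes, and popularity,
following "Popular Matchings in the Many-to-Many Setting".
-/

/-- The vote of a vertex with rank function `r` (smaller rank = more preferred)
comparing two options, where `none` stands for `null` (ranked below everything). -/
def vote {β : Type*} [DecidableEq β] (r : β → ℕ) : Option β → Option β → ℤ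
  | none, none => 0
  | some _, none => 1
  | none, some _ => -1
  | some x, some y => if x = y then 0 else if r x < r y then 1 else -1

/-- The common length `k` of the arrays compared in `δ_u(S₀,S₁)`:
after padding the smaller of `S₀, S₁` with nulls and removing common elements. -/
def kOf {β : Type*} [DecidableEq β] (S₀ S₁ : Finset β) : ℕ :=
  max S₀.card S₁.card - (S₀ ∩ S₁).card

/-- `S₀ ∖ S₁`, viewed as an array of `Option`s padded with `none` (null) to length `k`. -/
noncomputable def padded {β : Type*} [DecidableEq β] (S₀ S₁ : Finset β) (k : ℕ) : List (Option β) :=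
  ((S₀ \ S₁).toList.map some) ++ List.replicate (k - (S₀ \ S₁).card) none

/-- `δ_u(S₀,S₁)`: the minimum, over all permutations `σ` of `{1,…,k}`, of
`Σ_i vote_u(S'₀[i], S'₁[σ(i)])`. -/
noncomputable def deltaSet {β : Type*} [DecidableEq β] (r : β → ℕ) (S₀ S₁ : Finset β) : ℤ :=
  Finset.univ.inf' ⟨1, Finset.mem_univ 1⟩ fun σ : Equiv.Perm (Fin (kOf S₀ S₁)) =>
    ∑ i : Fin (kOf S₀ S₁),
      vote r ((padded S₀ S₁ (kOf S₀ S₁)).getD (i : ℕ) none)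
             ((padded S₁ S₀ (kOf S₀ S₁)).getD (σ i : ℕ) none)

/-- A bipartite instance `G = (A ∪ B, E)` with capacities `≥ 1` and strict
preferences of every vertex over its neighbors (given by injective-on-neighbors
rank functions; smaller rank = more preferred). -/
structure PrefInstance (α β : Type*) [Fintype α] [Fintype β] [DecidableEq α] [DecidableEq β] where
  E : Finset (α × β)
  capA : α → ℕ
  capB : β → ℕ
  rankA : α → β → ℕ
  rankB : β → α → ℕ
  capA_pos : ∀ a, 1 ≤ capA a
  capB_pos : ∀ b, 1 ≤ capB b
  rankA_injOn : ∀ a, Set.InjOn (rankA a) {b | (a, b) ∈ E}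
  rankB_injOn : ∀ b, Set.InjOn (rankB b) {a | (a, b) ∈ E}

namespace PrefInstance

variable {α β : Type*} [Fintype α] [Fintype β] [DecidableEq α] [DecidableEq β]

/-- `M(a)`: the set of `B`-vertices matched to `a` in `M`. -/
def rowSet (M : Finset (α × β)) (a : α) : Finset β :=
  Finset.univ.filter fun b => (a, b) ∈ M

/-- `M(b)`: the set of `A`-vertices matched to `b` in `M`. -/
def colSet (M : Finset (α × β)) (b : β) : Finset α :=
  Finset.univ.filter fun a => (a, b) ∈ M

variable (I : PrefInstance α β)

/-- `M` is a matching in `G`: a subset of `E` respecting all capacities. -/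
def IsMatching (M : Finset (α × β)) : Prop :=
  M ⊆ I.E ∧ (∀ a, (rowSet M a).card ≤ I.capA a) ∧ (∀ b, (colSet M b).card ≤ I.capB b)

/-- `Δ_a(M₀,M₁) = δ_a(M₀(a), M₁(a))` for `a ∈ A`. -/
noncomputable def DeltaA (M₀ M₁ : Finset (α × β)) (a : α) : ℤ :=
  deltaSet (I.rankA a) (rowSet M₀ a) (rowSet M₁ a)

/-- `Δ_b(M₀,M₁) = δ_b(M₀(b), M₁(b))` for `b ∈ B`. -/
noncomputable def DeltaB (M₀ M₁ : Finset (α × β)) (b : β) : ℤ :=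
  deltaSet (I.rankB b) (colSet M₀ b) (colSet M₁ b)

/-- `Δ(M₀,M₁) = Σ_{u ∈ A∪B} Δ_u(M₀,M₁)`. -/
noncomputable def Delta (M₀ M₁ : Finset (α × β)) : ℤ :=
  (∑ a, I.DeltaA M₀ M₁ a) + ∑ b, I.DeltaB M₀ M₁ b

/-- `M` is a popular matching: `Δ(M,T) ≥ 0` against every matching `T`. -/
def Popular (M : Finset (α × β)) : Prop :=
  I.IsMatching M ∧ ∀ T, I.IsMatching T → 0 ≤ I.Delta M T

/-- `M` is a weakly popular matching: `Δ(T,M) ≤ 0` for every matching `T`. -/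
def WeaklyPopular (M : Finset (α × β)) : Prop :=
  I.IsMatching M ∧ ∀ T, I.IsMatching T → I.Delta T M ≤ 0

/-- The edge `(a,b) ∈ E ∖ M` blocks `M`. -/
def Blocks (M : Finset (α × β)) (a : α) (b : β) : Prop :=
  (a, b) ∈ I.E ∧ (a, b) ∉ M ∧
  ((rowSet M a).card < I.capA a ∨ ∃ b' ∈ rowSet M a, I.rankA a b < I.rankA a b') ∧
  ((colSet M b).card < I.capB b ∨ ∃ a' ∈ colSet M b, I.rankB b a < I.rankB b a')

/-- `M` is a pairwise-stable matching: no edge blocks it. -/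
def Stable (M : Finset (α × β)) : Prop :=
  I.IsMatching M ∧ ∀ a b, ¬ I.Blocks M a b

end PrefInstance

/-!
The theorem rests on a matching `M` that is popular and strictly beats every larger matching:
`Δ(M, T) ≥ max 0 (|T| - |M|)` for all matchings `T`. A maximal element `N` of `≿` satisfies
`Δ(M, N) ≤ 0`: otherwise `M ≿_p N`, so `M ≿ N`, so `N ≿ M` by maximality, so `N ≿_wp M`, which says
`Δ(M, N) ≤ 0`. Hence `|N| ≤ |M|`. Popular matchings are maximal for `≿`, so the bound covers them
too.

`M` is a stable matching in the graph where each edge has two copies of opposite signs, `A`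
preferring sign `-1` and `B` preferring sign `1`, and at most one copy of an edge may be used.
It is a common independent set of two ordered matroids, obtained from Fleiner's kernel theorem.

The bound on `Δ(M, T)` is weak duality. The copy of an edge of `M` with sign `s` costs `s` at its
end in `A` and `-s` at its end in `B`, and a missing partner costs `1`. Stability gives each edge of
`T \ M` prices at its two ends with nonnegative sum, and at each vertex a vote is at least the price
of the partner gained plus the cost of the partner lost, however these are paired.
-/

open Finset

/-! ### Kernels of ordered matroids -/

/-- The Knaster–Tarski argument for stable matchings: `X` and `Y` are the contracts
offered to the two sides, of which they reject `R₁ X` and `R₂ Y`. -/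
lemma exists_diff_eq_diff_and_diff_subset_union {γ : Type*} (E : Set γ) (R₁ R₂ : Set γ →o Set γ) :
    ∃ X ⊆ E, ∃ Y ⊆ E, X \ R₁ X = Y \ R₂ Y ∧ E \ (X \ R₁ X) ⊆ R₁ X ∪ R₂ Y := by
  let F : Set γ →o Set γ :=
    ⟨fun X => E \ R₂ (E \ R₁ X), fun _ _ h =>
      Set.sdiff_subset_sdiff_right (R₂.monotone (Set.sdiff_subset_sdiff_right (R₁.monotone h)))⟩
  have hX : E \ R₂ (E \ R₁ F.lfp) = F.lfp := F.map_lfp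
  generalize F.lfp = X at hX
  refine ⟨X, hX ▸ Set.sdiff_subset, E \ R₁ X, Set.sdiff_subset, ?_, ?_⟩
  · ext x
    have := Set.ext_iff.1 hX x
    simp only [Set.mem_sdiff] at this ⊢
    tauto
  · intro x
    have := Set.ext_iff.1 hX x
    simp only [Set.mem_sdiff, Set.mem_union] at this ⊢
    tauto

section Kernel

variable {γ L L₁ L₂ : Type*} [LinearOrder L] [LinearOrder L₁] [LinearOrder L₂]

/-- The elements dominated by `X` in the matroid `M` ordered by the key `f` (smaller is better):
those spanned by strictly better elements of `X`. The greedy algorithm run on `X` discards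
exactly the dominated elements of `X`. -/
def dominated (M : Matroid γ) (f : γ → L) : Set γ →o Set γ where
  toFun X := {x | x ∈ M.closure {y ∈ X | f y < f x}}
  monotone' X Y h x hx := by
    have hsub : {y ∈ X | f y < f x} ⊆ {y ∈ Y | f y < f x} := fun _ hy => ⟨h hy.1, hy.2⟩
    exact M.closure_subset_closure hsub hx

lemma mem_dominated {M : Matroid γ} {f : γ → L} {X : Set γ} {x : γ} :
    x ∈ dominated M f X ↔ x ∈ M.closure {y ∈ X | f y < f x} := Iff.rfl

lemma indep_diff_dominated (M : Matroid γ) [M.Finitary] {f : γ → L} {X : Set γ} (hX : X ⊆ M.E)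
    (hf : Set.InjOn f X) : M.Indep (X \ dominated M f X) := by
  by_contra hdep
  obtain ⟨C, hCX, hC⟩ :=
    ((M.not_indep_iff (Set.sdiff_subset.trans hX)).1 hdep).exists_isCircuit_subset
  obtain ⟨x, hxC, hmax⟩ := Set.exists_max_image C f hC.finite hC.nonempty
  have hbetter : C \ {x} ⊆ {y ∈ X | f y < f x} := fun y hy =>
    ⟨(hCX hy.1).1, (hmax y hy.1).lt_of_ne fun h => hy.2 (hf (hCX hy.1).1 (hCX hxC).1 h)⟩
  exact (hCX hxC).2
    (M.closure_subset_closure hbetter (hC.mem_closure_sdiff_singleton_of_mem hxC))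

lemma dominated_diff_dominated [WellFoundedLT L] (M : Matroid γ) (f : γ → L) {X : Set γ}
    (hX : X ⊆ M.E) : dominated M f (X \ dominated M f X) = dominated M f X := by
  refine ((dominated M f).monotone Set.sdiff_subset).antisymm fun x => ?_
  induction x using (InvImage.wf f (wellFounded_lt (α := L))).induction with
  | _ x ih =>
    have hspan : {y ∈ X | f y < f x} ⊆
        M.closure {y ∈ X \ dominated M f X | f y < f x} := by
      rintro y ⟨hyX, hyx⟩
      by_cases hy : y ∈ dominated M f X
      · have hmono : {z ∈ X \ dominated M f X | f z < f y} ⊆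
            {z ∈ X \ dominated M f X | f z < f x} := fun _ hz => ⟨hz.1, hz.2.trans hyx⟩
        exact M.closure_subset_closure hmono (ih y hyx hy)
      · exact M.mem_closure_of_mem' ⟨⟨hyX, hy⟩, hyx⟩ (hX hyX)
    exact fun hx => M.closure_subset_closure_of_subset_closure hspan hx

/-- Fleiner's matroid kernel theorem. -/
theorem exists_matroid_kernel [WellFoundedLT L₁] [WellFoundedLT L₂] {M₁ M₂ : Matroid γ}
    [M₁.Finitary] [M₂.Finitary] (hE : M₁.E = M₂.E) {f₁ : γ → L₁} {f₂ : γ → L₂}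
    (hf₁ : Set.InjOn f₁ M₁.E) (hf₂ : Set.InjOn f₂ M₂.E) :
    ∃ K, M₁.Indep K ∧ M₂.Indep K ∧ M₁.E \ K ⊆ dominated M₁ f₁ K ∪ dominated M₂ f₂ K := by
  obtain ⟨X, hX, Y, hY, hXY, hcover⟩ :=
    exists_diff_eq_diff_and_diff_subset_union M₁.E (dominated M₁ f₁) (dominated M₂ f₂)
  have hdom₁ := dominated_diff_dominated M₁ f₁ hX
  have hdom₂ := dominated_diff_dominated M₂ f₂ (hE ▸ hY)
  rw [← hXY] at hdom₂
  refine ⟨X \ dominated M₁ f₁ X, indep_diff_dominated M₁ hX (hf₁.mono hX), ?_, ?_⟩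
  · exact hXY ▸ indep_diff_dominated M₂ (hE ▸ hY) (hf₂.mono (hE ▸ hY))
  · rwa [hdom₁, hdom₂]

end Kernel

/-! ### Partition matroids -/

section PartitionMatroid

variable {ε ι : Type*} [DecidableEq ι]

lemma exists_card_filter_lt_card_filter {I J : Finset ε} (v : ε → ι) (h : #I < #J) :
    ∃ i, #{x ∈ I | v x = i} < #{x ∈ J | v x = i} := by
  classical
  have hcard : ∀ S ⊆ I ∪ J, #S = ∑ i ∈ (I ∪ J).image v, #{x ∈ S | v x = i} := fun S hS =>
    card_eq_sum_card_fiberwise fun x hx => mem_image_of_mem v (hS hx)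
  rw [hcard I subset_union_left, hcard J subset_union_right] at h
  obtain ⟨i, -, hi⟩ := exists_lt_of_sum_lt h
  exact ⟨i, hi⟩

variable [DecidableEq ε]

lemma card_filter_insert_le {v : ε → ι} {c : ι → ℕ} {I : Finset ε} {e : ε}
    (hI : ∀ i, #{x ∈ I | v x = i} ≤ c i) (he : #{x ∈ I | v x = v e} < c (v e)) (i : ι) :
    #{x ∈ insert e I | v x = i} ≤ c i := by
  rw [filter_insert]
  split_ifs with hi
  · subst hi
    exact (card_insert_le _ _).trans he
  · exact hI i

/-- The partition matroid on `E`: a set is independent when each fiber of `v` meets it in at most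
`c i` elements. It describes the sets of edges that respect the capacities on one side of a
bipartite graph, `v` being the endpoint of an edge on that side. -/
def partitionMatroid (E : Set ε) (v : ε → ι) (c : ι → ℕ) : Matroid ε :=
  (IndepMatroid.ofFinset E (fun I => ↑I ⊆ E ∧ ∀ i, #{x ∈ I | v x = i} ≤ c i)
    (by simp)
    (fun I J hJ hIJ => ⟨(coe_subset.2 hIJ).trans hJ.1, fun i =>
      (card_le_card (filter_subset_filter _ hIJ)).trans (hJ.2 i)⟩)
    (fun I J hI hJ hlt => by
      obtain ⟨i, hi⟩ := exists_card_filter_lt_card_filter v hlt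
      obtain ⟨e, heJ, heI⟩ := exists_mem_notMem_of_card_lt_card hi
      rw [mem_filter] at heJ heI
      obtain ⟨heJ, rfl⟩ := heJ
      exact ⟨e, heJ, fun h => heI ⟨h, rfl⟩,
        by simpa using Set.insert_subset (hJ.1 heJ) hI.1,
        card_filter_insert_le hI.2 (hi.trans_le (hJ.2 _))⟩)
    (fun _ h => h.1)).matroid

variable {E : Set ε} {v : ε → ι} {c : ι → ℕ}

@[simp]
lemma partitionMatroid_ground : (partitionMatroid E v c).E = E := rfl

lemma partitionMatroid_indep_iff {I : Finset ε} :
    (partitionMatroid E v c).Indep I ↔ ↑I ⊆ E ∧ ∀ i, #{x ∈ I | v x = i} ≤ c i := by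
  rw [partitionMatroid, IndepMatroid.matroid_Indep, IndepMatroid.ofFinset_indep]

lemma le_card_filter_of_mem_closure_partitionMatroid {I : Finset ε} {e : ε}
    (hI : (partitionMatroid E v c).Indep I) (he : e ∉ I)
    (hcl : e ∈ (partitionMatroid E v c).closure I) : c (v e) ≤ #{x ∈ I | v x = v e} := by
  have hdep := (hI.mem_closure_iff_of_notMem (mem_coe.not.2 he)).1 hcl
  contrapose! hdep
  rw [partitionMatroid_indep_iff] at hI
  refine fun h => h.not_indep ?_
  rw [← coe_insert, partitionMatroid_indep_iff]
  exact ⟨by simpa using h.subset_ground, card_filter_insert_le hI.2 hdep⟩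

lemma saturated_and_forall_lt_of_mem_dominated {γ L : Type*} [LinearOrder L] {π : γ → ε}
    {f : γ → L} {K : Set γ} {I : Finset ε} (hKI : π '' K = I)
    (hK : ((partitionMatroid E v c).comap π).Indep K) {x : γ} (hx : π x ∉ I)
    (hdom : x ∈ dominated ((partitionMatroid E v c).comap π) f K) :
    c (v (π x)) ≤ #{e ∈ I | v e = v (π x)} ∧ ∀ y ∈ K, v (π y) = v (π x) → f y < f x := by
  classical
  obtain ⟨hI, hinj⟩ := Matroid.comap_indep_iff.1 hK
  rw [hKI] at hI
  obtain ⟨J, hJI, hJ⟩ : ∃ J ⊆ I, (J : Set ε) = π '' {y ∈ K | f y < f x} := by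
    have hsub : π '' {y ∈ K | f y < f x} ⊆ I := hKI ▸ Set.image_mono (Set.sep_subset _ _)
    obtain ⟨J, hJ⟩ := (I.finite_toSet.subset hsub).exists_finset_coe
    exact ⟨J, coe_subset.1 (hJ ▸ hsub), hJ⟩
  rw [mem_dominated, Matroid.comap_closure_eq, ← hJ] at hdom
  have hsat : c (v (π x)) ≤ #{e ∈ J | v e = v (π x)} :=
    le_card_filter_of_mem_closure_partitionMatroid (hI.subset (coe_subset.2 hJI))
      (fun h => hx (hJI h)) hdom
  have hfiber_subset := filter_subset_filter (fun e => v e = v (π x)) hJI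
  have hfiber : {e ∈ J | v e = v (π x)} = {e ∈ I | v e = v (π x)} :=
    eq_of_subset_of_card_le hfiber_subset (((partitionMatroid_indep_iff.1 hI).2 _).trans hsat)
  refine ⟨hfiber ▸ hsat, fun y hy hyx => ?_⟩
  have hyI : π y ∈ I := mem_coe.1 (hKI ▸ Set.mem_image_of_mem π hy)
  have hyJ : π y ∈ (J : Set ε) :=
    (mem_filter.1 (hfiber ▸ mem_filter.2 ⟨hyI, hyx⟩ : π y ∈ {e ∈ J | v e = v (π x)})).1
  obtain ⟨z, ⟨hz, hzx⟩, hzy⟩ := hJ ▸ hyJ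
  exact hinj hz hy hzy ▸ hzx

end PartitionMatroid

/-! ### Votes at a single vertex -/

section Votes

variable {α β : Type*}

lemma sum_getD_eq_sum_map {N : Type*} [AddCommMonoid N] {l : List α} {k : ℕ} (hk : l.length = k)
    (d : α) (F : α → N) : ∑ i : Fin k, F (l.getD i d) = (l.map F).sum := by
  subst hk
  rw [← Fin.sum_univ_fun_getElem]
  simp

lemma getD_mem_of_lt {l : List α} {n : ℕ} (hn : n < l.length) (d : α) : l.getD n d ∈ l := by
  rw [List.getD_eq_getElem _ _ hn]
  exact List.getElem_mem hn

section Duality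

variable [DecidableEq β] {S₀ S₁ : Finset β}

lemma kOf_comm (S₀ S₁ : Finset β) : kOf S₀ S₁ = kOf S₁ S₀ := by
  rw [kOf, kOf, max_comm, inter_comm]

lemma length_padded (S₀ S₁ : Finset β) : (padded S₀ S₁ (kOf S₀ S₁)).length = kOf S₀ S₁ := by
  have := card_sdiff_add_card_inter S₀ S₁
  simp only [padded, kOf, List.length_append, List.length_map, length_toList,
    List.length_replicate]
  lia

lemma card_lt_card_of_none_mem_padded (h : none ∈ padded S₀ S₁ (kOf S₀ S₁)) : #S₀ < #S₁ := by
  have := card_sdiff_add_card_inter S₀ S₁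
  have hpos : kOf S₀ S₁ - #(S₀ \ S₁) ≠ 0 := by simpa [padded] using h
  rw [kOf] at hpos
  lia

lemma some_mem_padded {k : ℕ} {x : β} : some x ∈ padded S₀ S₁ k ↔ x ∈ S₀ \ S₁ := by
  simp [padded]

lemma sum_map_padded {N : Type*} [AddCommMonoid N] (S₀ S₁ : Finset β) (F : Option β → N) :
    ((padded S₀ S₁ (kOf S₀ S₁)).map F).sum =
      ∑ x ∈ S₀ \ S₁, F (some x) + (#S₁ - #S₀) • F none := by
  have hnone : kOf S₀ S₁ - #(S₀ \ S₁) = #S₁ - #S₀ := by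
    have := card_sdiff_add_card_inter S₀ S₁
    rw [kOf]
    lia
  simp only [padded, hnone, List.map_append, List.map_map, List.sum_append, List.map_replicate,
    List.sum_replicate]
  rw [← sum_map_toList]
  rfl

lemma sum_map_padded_add_sum_map_padded_le_deltaSet (r : β → ℕ) (P Q : Option β → ℤ)
    (h : ∀ x ∈ padded S₀ S₁ (kOf S₀ S₁), ∀ y ∈ padded S₁ S₀ (kOf S₁ S₀), P y + Q x ≤ vote r x y) :
    ((padded S₁ S₀ (kOf S₁ S₀)).map P).sum + ((padded S₀ S₁ (kOf S₀ S₁)).map Q).sum ≤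
      deltaSet r S₀ S₁ := by
  have hlen₀ := length_padded S₀ S₁
  have hlen₁ := length_padded S₁ S₀
  rw [kOf_comm S₁ S₀] at h hlen₁ ⊢
  refine le_inf' _ _ fun σ _ => ?_
  rw [← sum_getD_eq_sum_map hlen₁ none P, ← sum_getD_eq_sum_map hlen₀ none Q,
    ← Equiv.sum_comp σ, ← sum_add_distrib]
  exact sum_le_sum fun i _ =>
    h _ (getD_mem_of_lt (by simp [hlen₀]) _) _ (getD_mem_of_lt (by simp [hlen₁]) _)

/-- Weak duality at one vertex: partners gained have prices `p`, partners lost have costs `q`, and a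
missing partner has price `0` when gained and cost `1` when lost. -/
lemma sum_add_sum_add_card_sub_card_le_deltaSet (r : β → ℕ) (p q : β → ℤ)
    (hvote : ∀ x ∈ S₀ \ S₁, ∀ y ∈ S₁ \ S₀, p y + q x ≤ vote r (some x) (some y))
    (hq : ∀ x ∈ S₀ \ S₁, q x ≤ 1) (hp : #S₀ < #S₁ → ∀ y ∈ S₁ \ S₀, p y ≤ -2) :
    ∑ y ∈ S₁ \ S₀, p y + ∑ x ∈ S₀ \ S₁, q x + (#S₁ - #S₀ : ℕ) ≤ deltaSet r S₀ S₁ := by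
  have h := sum_map_padded_add_sum_map_padded_le_deltaSet (S₀ := S₀) (S₁ := S₁) r
    (fun y => y.elim 0 p) (fun x => x.elim 1 q) ?_
  · rw [sum_map_padded, sum_map_padded] at h
    simpa [add_assoc] using h
  · rintro (_ | x) hx (_ | y) hy
    · exact absurd (card_lt_card_of_none_mem_padded hx) (card_lt_card_of_none_mem_padded hy).not_gt
    · have := hp (card_lt_card_of_none_mem_padded hx) y (some_mem_padded.1 hy)
      simp only [Option.elim, vote]
      lia
    · simpa [vote] using hq x (some_mem_padded.1 hx)
    · exact hvote x (some_mem_padded.1 hx) y (some_mem_padded.1 hy)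

end Duality

/-- A vertex with rank function `r` and capacity `c`, holding each partner `x ∈ S` at cost `κ x`,
rejects `y` at cost `s`: it is saturated and ranks all of its partners above `y`, where smaller
costs come first and ties are broken by `r`. -/
def Rejects (r : β → ℕ) (κ : β → ℤˣ) (S : Finset β) (c : ℕ) (s : ℤˣ) (y : β) : Prop :=
  c ≤ #S ∧ ∀ x ∈ S, toLex (κ x, r x) < toLex (s, r y)

open Classical in
/-- The price a vertex holding `S` pays for gaining `y`: `1` for each of the two copies of `y` that
it rejects and `-1` for each copy that it would accept. -/
noncomputable def price (r : β → ℕ) (κ : β → ℤˣ) (S : Finset β) (c : ℕ) (y : β) : ℤ :=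
  ∑ s : ℤˣ, if Rejects r κ S c s y then 1 else -1

variable {r : β → ℕ} {κ : β → ℤˣ} {S : Finset β} {c : ℕ}

lemma price_eq_neg_two (hS : #S < c) (y : β) : price r κ S c y = -2 := by
  simp [price, Rejects, hS.not_ge]

lemma price_add_price_nonneg {r' : α → ℕ} {κ' : α → ℤˣ} {S' : Finset α} {c' : ℕ} {x : α} {y : β}
    (h : ∀ s, Rejects r κ S c s y ∨ Rejects r' κ' S' c' (-s) x) :
    0 ≤ price r κ S c y + price r' κ' S' c' x := by
  classical
  have hneg : price r' κ' S' c' x = ∑ s, if Rejects r' κ' S' c' (-s) x then 1 else -1 :=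
    (Equiv.sum_comp (Equiv.neg ℤˣ) _).symm
  rw [hneg, price, ← sum_add_distrib]
  refine sum_nonneg fun s _ => ?_
  rcases h s with h | h <;> simp only [if_pos h] <;> split_ifs <;> simp

lemma price_add_cost_le_vote [DecidableEq β] {x y : β} (hx : x ∈ S) (hxy : x ≠ y) :
    price r κ S c y + κ x ≤ vote r (some x) (some y) := by
  have hlt : ∀ s, Rejects r κ S c s y → κ x < s ∨ κ x = s ∧ r x < r y := fun s hs => by
    simpa [Prod.Lex.toLex_lt_toLex] using hs.2 x hx
  rw [price, UnitsInt.univ, sum_pair (by decide), vote, if_neg hxy]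
  rcases Int.units_eq_one_or (κ x) with hκ | hκ <;> rw [hκ] at hlt ⊢
  · have haccept : ¬ Rejects r κ S c (-1) y := fun h =>
      (hlt _ h).elim (by decide) fun h => absurd h.1 (by decide)
    have hbetter : Rejects r κ S c 1 y → r x < r y := fun h => by simpa using hlt _ h
    rw [if_neg haccept]
    split_ifs with h₁ h₂ <;> simp_all
  · have hbetter : Rejects r κ S c (-1) y → r x < r y := fun h => by simpa using hlt _ h
    split_ifs with h₁ h₂ h₃ <;> simp_all

lemma sum_price_add_sum_cost_add_card_sub_card_le_deltaSet [DecidableEq β] (r : β → ℕ)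
    (κ : β → ℤˣ) (S₀ : Finset β) {S₁ : Finset β} (hc : #S₁ ≤ c) :
    ∑ y ∈ S₁ \ S₀, price r κ S₀ c y + ∑ x ∈ S₀ \ S₁, (κ x : ℤ) + (#S₁ - #S₀ : ℕ) ≤
      deltaSet r S₀ S₁ := by
  refine sum_add_sum_add_card_sub_card_le_deltaSet r _ _ (fun x hx y hy => ?_) (fun x _ => ?_)
    (fun hlt y _ => (price_eq_neg_two (hlt.trans_le hc) y).le)
  · rw [mem_sdiff] at hx hy
    exact price_add_cost_le_vote hx.1 (ne_of_mem_of_not_mem hx.1 hy.2)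
  · rcases Int.units_eq_one_or (κ x) with h | h <;> simp [h]

end Votes

/-! ### Stable matchings of signed edges -/

namespace PrefInstance

section Neighbors

variable {α β : Type*} [DecidableEq α] [DecidableEq β]

@[simp]
lemma mem_rowSet [Fintype β] {M : Finset (α × β)} {a : α} {b : β} :
    b ∈ rowSet M a ↔ (a, b) ∈ M := by
  simp [rowSet]

@[simp]
lemma mem_colSet [Fintype α] {M : Finset (α × β)} {a : α} {b : β} :
    a ∈ colSet M b ↔ (a, b) ∈ M := by
  simp [colSet]

lemma card_rowSet [Fintype β] (M : Finset (α × β)) (a : α) :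
    #(rowSet M a) = #{e ∈ M | e.1 = a} :=
  card_nbij' (fun b => (a, b)) Prod.snd (by intro; simp) (by rintro ⟨_, _⟩; aesop)
    (by intro; simp) (by rintro ⟨_, _⟩; aesop)

lemma card_colSet [Fintype α] (M : Finset (α × β)) (b : β) :
    #(colSet M b) = #{e ∈ M | e.2 = b} :=
  card_nbij' (fun a => (a, b)) Prod.fst (by intro; simp) (by rintro ⟨_, _⟩; aesop)
    (by intro; simp) (by rintro ⟨_, _⟩; aesop)

variable [Fintype α] [Fintype β]

lemma sum_rowSet_sdiff {N : Type*} [AddCommMonoid N] (M T : Finset (α × β)) (F : α → β → N) :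
    ∑ a, ∑ b ∈ rowSet M a \ rowSet T a, F a b = ∑ e ∈ M \ T, F e.1 e.2 :=
  (sum_finset_product' (M \ T) univ (fun a => rowSet M a \ rowSet T a) (by simp)).symm

lemma sum_colSet_sdiff {N : Type*} [AddCommMonoid N] (M T : Finset (α × β)) (F : α → β → N) :
    ∑ b, ∑ a ∈ colSet M b \ colSet T b, F a b = ∑ e ∈ M \ T, F e.1 e.2 :=
  (sum_finset_product_right' (M \ T) univ (fun b => colSet M b \ colSet T b) (by simp)).symm

lemma sum_card_rowSet (M : Finset (α × β)) : ∑ a, #(rowSet M a) = #M := by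
  simp only [card_rowSet]
  exact (card_eq_sum_card_fiberwise (by simp)).symm

end Neighbors

variable {α β : Type*} [Fintype α] [Fintype β] [DecidableEq α] [DecidableEq β]
variable {I : PrefInstance α β} {M T : Finset (α × β)} {σ : α × β → ℤˣ}

/-- `M`, whose edge `e` is used with sign `σ e`, is a stable matching of signed edges: each of the
two signed copies of an edge outside `M` is rejected at one of its ends. A sign `s` is a cost `s` in
`A` and `-s` in `B`. -/
structure IsSignedStable (I : PrefInstance α β) (M : Finset (α × β)) (σ : α × β → ℤˣ) : Prop where
  isMatching : I.IsMatching M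
  rejects_or_rejects : ∀ {a b}, (a, b) ∈ I.E → (a, b) ∉ M → ∀ s,
    Rejects (I.rankA a) (fun b' => σ (a, b')) (rowSet M a) (I.capA a) s b ∨
      Rejects (I.rankB b) (fun a' => -σ (a', b)) (colSet M b) (I.capB b) (-s) a

theorem IsSignedStable.card_sub_card_le_delta (h : I.IsSignedStable M σ) (hT : I.IsMatching T) :
    ((#T - #M : ℕ) : ℤ) ≤ I.Delta M T := by
  let pA (a : α) (b : β) : ℤ :=
    price (I.rankA a) (fun b' => σ (a, b')) (rowSet M a) (I.capA a) b
  let pB (a : α) (b : β) : ℤ :=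
    price (I.rankB b) (fun a' => -σ (a', b)) (colSet M b) (I.capB b) a
  have hA : ∑ e ∈ T \ M, pA e.1 e.2 + ∑ e ∈ M \ T, (σ e : ℤ) +
      ∑ a, ((#(rowSet T a) - #(rowSet M a) : ℕ) : ℤ) ≤ ∑ a, I.DeltaA M T a := by
    rw [← sum_rowSet_sdiff T M, ← sum_rowSet_sdiff M T fun a b => (σ (a, b) : ℤ),
      ← sum_add_distrib, ← sum_add_distrib]
    exact sum_le_sum fun a _ =>
      sum_price_add_sum_cost_add_card_sub_card_le_deltaSet _ _ _ (hT.2.1 a)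
  have hB : ∑ e ∈ T \ M, pB e.1 e.2 + ∑ e ∈ M \ T, ((-σ e : ℤˣ) : ℤ) ≤
      ∑ b, I.DeltaB M T b := by
    rw [← sum_colSet_sdiff T M, ← sum_colSet_sdiff M T fun a b => ((-σ (a, b) : ℤˣ) : ℤ),
      ← sum_add_distrib]
    exact sum_le_sum fun b _ => le_of_add_le_of_nonneg_left
      (sum_price_add_sum_cost_add_card_sub_card_le_deltaSet _ _ _ (hT.2.2 b)) (Nat.cast_nonneg _)
  have hprice : 0 ≤ ∑ e ∈ T \ M, pA e.1 e.2 + ∑ e ∈ T \ M, pB e.1 e.2 := by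
    rw [← sum_add_distrib]
    refine sum_nonneg fun e he => price_add_price_nonneg ?_
    rw [mem_sdiff] at he
    exact h.rejects_or_rejects (hT.1 he.1) he.2
  have hcost : ∑ e ∈ M \ T, (σ e : ℤ) + ∑ e ∈ M \ T, ((-σ e : ℤˣ) : ℤ) = 0 := by
    simp
  have hcard : #T - #M ≤ ∑ a, (#(rowSet T a) - #(rowSet M a)) := by
    rw [tsub_le_iff_right, ← sum_card_rowSet, ← sum_card_rowSet M, ← sum_add_distrib]
    exact sum_le_sum fun a _ => le_tsub_add
  rw [← Nat.cast_sum] at hA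
  rw [Delta]
  lia

/-- The preferences of the vertices in `A` over signed edges, smaller keys being preferred: the sign
is the cost at `A`. Numbering the vertices combines the preferences into one linear order. -/
noncomputable def keyA (I : PrefInstance α β) (c : (α × β) × ℤˣ) :
    Fin (Fintype.card α) ×ₗ ℤˣ ×ₗ ℕ :=
  toLex (Fintype.equivFin α c.1.1, toLex (c.2, I.rankA c.1.1 c.1.2))

/-- The preferences of the vertices in `B` over signed edges, encoded as in `keyA`, the cost at `B`
being the opposite of the sign. -/
noncomputable def keyB (I : PrefInstance α β) (c : (α × β) × ℤˣ) :
    Fin (Fintype.card β) ×ₗ ℤˣ ×ₗ ℕ :=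
  toLex (Fintype.equivFin β c.1.2, toLex (-c.2, I.rankB c.1.2 c.1.1))

lemma keyA_injOn (I : PrefInstance α β) : Set.InjOn I.keyA {c | c.1 ∈ I.E} := by
  rintro ⟨⟨a, b⟩, s⟩ hc ⟨⟨a', b'⟩, s'⟩ hc' h
  simp only [keyA, EmbeddingLike.apply_eq_iff_eq, Prod.mk.injEq] at h
  obtain ⟨rfl, rfl, hrank⟩ := h
  rw [I.rankA_injOn a hc hc' hrank]

lemma keyB_injOn (I : PrefInstance α β) : Set.InjOn I.keyB {c | c.1 ∈ I.E} := by
  rintro ⟨⟨a, b⟩, s⟩ hc ⟨⟨a', b'⟩, s'⟩ hc' h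
  simp only [keyB, EmbeddingLike.apply_eq_iff_eq, Prod.mk.injEq, neg_inj] at h
  obtain ⟨rfl, rfl, hrank⟩ := h
  rw [I.rankB_injOn b hc hc' hrank]

theorem exists_isSignedStable (I : PrefInstance α β) : ∃ M σ, I.IsSignedStable M σ := by
  obtain ⟨K, hKA, hKB, hcover⟩ := exists_matroid_kernel
    (M₁ := (partitionMatroid (I.E : Set (α × β)) Prod.fst I.capA).comap Prod.fst)
    (M₂ := (partitionMatroid (I.E : Set (α × β)) Prod.snd I.capB).comap Prod.fst)
    rfl I.keyA_injOn I.keyB_injOn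
  obtain ⟨M, hM⟩ := (Set.toFinite (Prod.fst '' K)).exists_finset_coe
  have hsign : ∀ e ∈ M, ∃ s, (e, s) ∈ K := fun e he => by
    simpa using (Set.ext_iff.1 hM e).1 he
  choose! σ hσ using hsign
  have hMA := partitionMatroid_indep_iff.1 (hM ▸ (Matroid.comap_indep_iff.1 hKA).1)
  have hMB := partitionMatroid_indep_iff.1 (hM ▸ (Matroid.comap_indep_iff.1 hKB).1)
  refine ⟨M, σ, ⟨coe_subset.1 hMA.1, fun a => card_rowSet M a ▸ hMA.2 a,
    fun b => card_colSet M b ▸ hMB.2 b⟩, fun {a b} hE hab s => ?_⟩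
  have hK : ((a, b), s) ∉ K := fun h => hab (mem_coe.1 (hM ▸ Set.mem_image_of_mem _ h))
  refine (hcover ⟨hE, hK⟩).imp (fun hdom => ?_) (fun hdom => ?_)
  · obtain ⟨hsat, hlt⟩ := saturated_and_forall_lt_of_mem_dominated hM.symm hKA hab hdom
    refine ⟨card_rowSet M a ▸ hsat, fun x hx => ?_⟩
    simpa [keyA, Prod.Lex.toLex_lt_toLex] using hlt _ (hσ _ (mem_rowSet.1 hx)) rfl
  · obtain ⟨hsat, hlt⟩ := saturated_and_forall_lt_of_mem_dominated hM.symm hKB hab hdom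
    refine ⟨card_colSet M b ▸ hsat, fun x hx => ?_⟩
    simpa [keyB, Prod.Lex.toLex_lt_toLex] using hlt _ (hσ _ (mem_colSet.1 hx)) rfl

end PrefInstance

/-- Let `≿` be any binary relation on the matchings of `G` with
`≿_p ⊆ ≿ ⊆ ≿_wp` (where `M₀ ≿_p M₁` iff `Δ(M₀,M₁) ≥ 0` and `M₀ ≿_wp M₁` iff
`Δ(M₁,M₀) ≤ 0`). Then every maximal element of `≿` has size at most the maximum size of
a popular matching, and some maximal element of `≿` attains this size; hence the size
of a maximum-size maximal element of `≿` is the same for every such relation `≿`. -/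
theorem statement15 {α β : Type*} [Fintype α] [Fintype β] [DecidableEq α] [DecidableEq β]
    (I : PrefInstance α β) (r : Finset (α × β) → Finset (α × β) → Prop)
    (hp : ∀ M₀ M₁ : Finset (α × β), I.IsMatching M₀ → I.IsMatching M₁ →
      0 ≤ I.Delta M₀ M₁ → r M₀ M₁)
    (hwp : ∀ M₀ M₁ : Finset (α × β), I.IsMatching M₀ → I.IsMatching M₁ →
      r M₀ M₁ → I.Delta M₁ M₀ ≤ 0) :
    ∃ M₀ : Finset (α × β), I.Popular M₀ ∧
      (I.IsMatching M₀ ∧ ∀ M₁, I.IsMatching M₁ → r M₁ M₀ → r M₀ M₁) ∧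
      (∀ P : Finset (α × β), I.Popular P → P.card ≤ M₀.card) ∧
      (∀ M : Finset (α × β),
        (I.IsMatching M ∧ ∀ M₁, I.IsMatching M₁ → r M₁ M → r M M₁) →
        M.card ≤ M₀.card) := by
  obtain ⟨M₀, σ, h⟩ := I.exists_isSignedStable
  have hDelta : ∀ T, I.IsMatching T → 0 ≤ I.Delta M₀ T := fun T hT =>
    (Nat.cast_nonneg _).trans (h.card_sub_card_le_delta hT)
  have hpop : I.Popular M₀ := ⟨h.isMatching, hDelta⟩
  have hmax : ∀ P, I.Popular P → I.IsMatching P ∧ ∀ M₁, I.IsMatching M₁ → r M₁ P → r P M₁ :=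
    fun P hP => ⟨hP.1, fun M₁ hM₁ _ => hp P M₁ hP.1 hM₁ (hP.2 M₁ hM₁)⟩
  have hsize : ∀ M, (I.IsMatching M ∧ ∀ M₁, I.IsMatching M₁ → r M₁ M → r M M₁) → #M ≤ #M₀ := by
    rintro M ⟨hM, hMmax⟩
    have hle : I.Delta M₀ M ≤ 0 :=
      hwp M M₀ hM hpop.1 (hMmax M₀ hpop.1 (hp M₀ M hpop.1 hM (hDelta M hM)))
    have := h.card_sub_card_le_delta hM
    lia
  exact ⟨M₀, hpop, hmax M₀ hpop, fun P hP => hsize P (hmax P hP), hsize⟩
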